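/- arXiv:2304.01840 — 3 statements merged into one kernel-verified Lean document; each statement's English description precedes it below -/
import Mathlib

section
/- There exists a function ν* : N → ℝ (the Gittins index) such that for every ν ∈ ℝ, the set S(ν) := {j ∈ N : ν*_j > ν} satisfies ν_j^{S(ν)} ≤ ν for all j ∉ S(ν) and ν_j^{S(ν)} ≥ ν for all j ∈ S(ν); consequently, for every ν ∈ ℝ, every initial state i ∈ N, and every feasible pair (x⁰, x¹) for i, Σ_j (R_j − ν) x¹_j ≤ f_i^{S(ν)} − ν g_i^{S(ν)}. -/
open Matrix BigOperators
open scoped Classical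

noncomputable section

/-- Transition matrix of the `S`-active policy: row `i` of `P` if `i ∈ S`,
the `i`-th standard unit row otherwise. -/
def PAct {N : Type*} [DecidableEq N] (P : Matrix N N ℝ) (S : Finset N) : Matrix N N ℝ :=
  fun i j => if i ∈ S then P i j else if i = j then 1 else 0

/-- Transition matrix of the `Sᶜ`-active policy. -/
def PPas {N : Type*} [DecidableEq N] (P : Matrix N N ℝ) (S : Finset N) : Matrix N N ℝ :=
  fun i j => if i ∈ S then (if i = j then 1 else 0) else P i j

/-- Basis matrix `B^S = I - β P^S`. -/
def BMat {N : Type*} [Fintype N] [DecidableEq N] (β : ℝ) (P : Matrix N N ℝ) (S : Finset N) :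
    Matrix N N ℝ := 1 - β • PAct P S

/-- Non-basic matrix `N^S = I - β P^{Sᶜ}`. -/
def NMat {N : Type*} [Fintype N] [DecidableEq N] (β : ℝ) (P : Matrix N N ℝ) (S : Finset N) :
    Matrix N N ℝ := 1 - β • PPas P S

/-- Basis inverse `H^S = (B^S)⁻¹`. -/
def HMat {N : Type*} [Fintype N] [DecidableEq N] (β : ℝ) (P : Matrix N N ℝ) (S : Finset N) :
    Matrix N N ℝ := (BMat β P S)⁻¹

/-- Tableau matrix `A^S = N^S · H^S`. -/
def AMat {N : Type*} [Fintype N] [DecidableEq N] (β : ℝ) (P : Matrix N N ℝ) (S : Finset N) :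
    Matrix N N ℝ := NMat β P S * HMat β P S

/-- Work measure `g^S = H^S · 1_S`. -/
def gWork {N : Type*} [Fintype N] [DecidableEq N] (β : ℝ) (P : Matrix N N ℝ) (S : Finset N) :
    N → ℝ := (HMat β P S).mulVec (fun j => if j ∈ S then 1 else 0)

/-- Reward measure `f^S = H^S · (R·1_S)`. -/
def fRew {N : Type*} [Fintype N] [DecidableEq N] (β : ℝ) (P : Matrix N N ℝ) (R : N → ℝ)
    (S : Finset N) : N → ℝ := (HMat β P S).mulVec (fun j => if j ∈ S then R j else 0)

/-- Marginal work `w_i^S`. -/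
def wMarg {N : Type*} [Fintype N] [DecidableEq N] (β : ℝ) (P : Matrix N N ℝ) (S : Finset N)
    (i : N) : ℝ :=
  if i ∈ S then (1 - β) * gWork β P S i
  else 1 + β * ∑ j ∈ S, P i j * gWork β P S j

/-- Marginal reward `r_i^S`. -/
def rMarg {N : Type*} [Fintype N] [DecidableEq N] (β : ℝ) (P : Matrix N N ℝ) (R : N → ℝ)
    (S : Finset N) (i : N) : ℝ :=
  if i ∈ S then (1 - β) * fRew β P R S i
  else R i + β * ∑ j ∈ S, P i j * fRew β P R S j

/-- Marginal productivity rate `ν_i^S = r_i^S / w_i^S`. -/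
def nuMarg {N : Type*} [Fintype N] [DecidableEq N] (β : ℝ) (P : Matrix N N ℝ) (R : N → ℝ)
    (S : Finset N) (i : N) : ℝ := rMarg β P R S i / wMarg β P S i

/-- Feasibility of a pair of row vectors `(x⁰, x¹)` for initial state `i`:
`x⁰, x¹ ≥ 0` and `(1-β) x⁰ + x¹ (I - β P) = e_i`. -/
def Feasible {N : Type*} [Fintype N] [DecidableEq N] (β : ℝ) (P : Matrix N N ℝ) (i : N)
    (x0 x1 : N → ℝ) : Prop :=
  (∀ j, 0 ≤ x0 j) ∧ (∀ j, 0 ≤ x1 j) ∧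
    (1 - β) • x0 + Matrix.vecMul x1 (1 - β • P) = Pi.single i 1

/-- Modified reward vector `R̂ = R - (I - βP)·Q`. -/
def Rhat {N : Type*} [Fintype N] [DecidableEq N] (β : ℝ) (P : Matrix N N ℝ) (R Q : N → ℝ) :
    N → ℝ := fun i => R i - ((1 - β • P).mulVec Q) i

/-!
Charging `ν` per unit of work replaces the reward `R` by `R - ν`, and `f^S - ν g^S` is the reward
measure of `R - ν`. The optimal charged value `V` is the fixed point of the optimality operator
`V ↦ (R - ν + β P V)⁺`. Since `I - β P^S` is inverse-monotone, `f^S - ν g^S ≤ V` for every `S`, with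
equality for `S = {V > 0}`. Hence `V_i > 0` iff `ν g_i^S < f_i^S` for some `S ∋ i`, that is, iff `ν`
lies below Gittins' ratio `max_{S ∋ i} f_i^S / g_i^S`. The upper level sets of this index are
therefore the sets `{V > 0}`, on which the marginal rates are compared with `ν` by reading the sign
of `V` and of `R - ν + β P V`; and `V` is dual feasible for the linear program.
-/

/-- Nonnegative matrices with row sums at most `1`: transition matrices of Markov chains that may be
killed, in which the missing mass of a row is the killing probability. -/
structure IsRowSubstochastic {N : Type*} [Fintype N] (P : Matrix N N ℝ) : Prop where
  nonneg : ∀ i j, 0 ≤ P i j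
  sum_le_one : ∀ i, ∑ j, P i j ≤ 1

/-- Optimality operator of the discounted problem with rewards `c` in which one may retire at any
time with reward `0`. -/
def bellman {N : Type*} [Fintype N] (β : ℝ) (P : Matrix N N ℝ) (c V : N → ℝ) : N → ℝ :=
  (c + β • (P *ᵥ V))⁺

/-- Gittins index of the state `i`: the maximum of `f_i^S / g_i^S` over the active sets `S`
containing `i`. The denominators are positive by `gWork_pos`. -/
def gittinsIndex {N : Type*} [Fintype N] [DecidableEq N] (β : ℝ) (P : Matrix N N ℝ) (R : N → ℝ)
    (i : N) : ℝ :=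
  (Finset.univ.filter fun S : Finset N => i ∈ S).sup'
    (Finset.filter_nonempty_iff.2 ⟨{i}, Finset.mem_univ _, Finset.mem_singleton_self i⟩)
    fun S => fRew β P R S i / gWork β P S i

section FixedPoint

variable {N : Type*} [Fintype N] {P : Matrix N N ℝ} {β : ℝ} {c V : N → ℝ}

lemma IsRowSubstochastic.mulVec_apply_le (hP : IsRowSubstochastic P) {v : N → ℝ} {a : ℝ}
    (ha : 0 ≤ a) (hv : ∀ j, v j ≤ a) (i : N) : (P *ᵥ v) i ≤ a :=
  calc ∑ j, P i j * v j
      ≤ ∑ j, P i j * a :=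
        Finset.sum_le_sum fun j _ => mul_le_mul_of_nonneg_left (hv j) (hP.nonneg i j)
    _ = (∑ j, P i j) * a := (Finset.sum_mul ..).symm
    _ ≤ a := mul_le_of_le_one_left ha (hP.sum_le_one i)

lemma IsRowSubstochastic.mulVec_nonneg (hP : IsRowSubstochastic P) {v : N → ℝ} (hv : 0 ≤ v) :
    0 ≤ P *ᵥ v :=
  fun i => Finset.sum_nonneg fun j _ => mul_nonneg (hP.nonneg i j) (hv j)

lemma IsRowSubstochastic.abs_mulVec_sub_le_dist (hP : IsRowSubstochastic P) (u v : N → ℝ) (i : N) :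
    |(P *ᵥ u) i - (P *ᵥ v) i| ≤ dist u v := by
  have sub_le (u v : N → ℝ) : (P *ᵥ u) i - (P *ᵥ v) i ≤ dist u v := by
    rw [← Pi.sub_apply, ← mulVec_sub]
    exact hP.mulVec_apply_le dist_nonneg
      (fun j => (le_abs_self _).trans (dist_le_pi_dist u v j)) i
  exact abs_sub_le_iff.2 ⟨sub_le u v, dist_comm u v ▸ sub_le v u⟩

lemma contractingWith_bellman (hP : IsRowSubstochastic P) (hβ0 : 0 ≤ β) (hβ1 : β < 1)
    (c : N → ℝ) : ContractingWith ⟨β, hβ0⟩ (bellman β P c) := by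
  refine ⟨hβ1, LipschitzWith.of_dist_le_mul fun u v => ?_⟩
  refine (dist_pi_le_iff (mul_nonneg hβ0 dist_nonneg)).2 fun i => ?_
  calc dist (bellman β P c u i) (bellman β P c v i)
      ≤ dist (c i + β * (P *ᵥ u) i) (c i + β * (P *ᵥ v) i) :=
        (lipschitzWith_posPart.dist_le_mul _ _).trans_eq (one_mul _)
    _ = β * |(P *ᵥ u) i - (P *ᵥ v) i| := by
        rw [dist_add_left, Real.dist_eq, ← mul_sub, abs_mul, abs_of_nonneg hβ0]
    _ ≤ β * dist u v := mul_le_mul_of_nonneg_left (hP.abs_mulVec_sub_le_dist u v i) hβ0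

lemma exists_isFixedPt_bellman (hP : IsRowSubstochastic P) (hβ0 : 0 ≤ β) (hβ1 : β < 1)
    (c : N → ℝ) : ∃ V, Function.IsFixedPt (bellman β P c) V :=
  ⟨_, (contractingWith_bellman hP hβ0 hβ1 c).fixedPoint_isFixedPt⟩

lemma nonneg_of_isFixedPt_bellman (hV : Function.IsFixedPt (bellman β P c) V) : 0 ≤ V :=
  hV ▸ posPart_nonneg _

lemma add_mulVec_le_of_isFixedPt_bellman (hV : Function.IsFixedPt (bellman β P c) V) (i : N) :
    c i + β * (P *ᵥ V) i ≤ V i :=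
  (le_posPart _).trans_eq (congrFun hV i)

lemma eq_add_mulVec_of_isFixedPt_bellman (hV : Function.IsFixedPt (bellman β P c) V) {i : N}
    (hi : 0 < V i) : V i = c i + β * (P *ᵥ V) i := by
  have hVi : (c i + β * (P *ᵥ V) i)⁺ = V i := congrFun hV i
  rw [← hVi, posPart_eq_of_posPart_pos (hVi ▸ hi)]

end FixedPoint

section PartialActivity

variable {N : Type*} [Fintype N] [DecidableEq N] {P : Matrix N N ℝ} {β : ℝ} {c : N → ℝ}
  {S : Finset N} {i : N}

lemma one_sub_smul_mulVec_apply (β : ℝ) (P : Matrix N N ℝ) (v : N → ℝ) (i : N) :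
    ((1 - β • P) *ᵥ v) i = v i - β * (P *ᵥ v) i := by
  rw [sub_mulVec, one_mulVec, smul_mulVec, Pi.sub_apply, Pi.smul_apply, smul_eq_mul]

lemma IsRowSubstochastic.le_of_one_sub_smul_mulVec_le (hP : IsRowSubstochastic P) (hβ0 : 0 ≤ β)
    (hβ1 : β < 1) {u v : N → ℝ} (huv : (1 - β • P) *ᵥ u ≤ (1 - β • P) *ᵥ v) : u ≤ v := by
  intro i
  obtain ⟨m, -, hm⟩ := Finset.exists_max_image Finset.univ (u - v) ⟨i, Finset.mem_univ i⟩
  suffices (u - v) m ≤ 0 from sub_nonpos.1 ((hm i (Finset.mem_univ i)).trans this)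
  by_contra! hpos
  have hPm : (P *ᵥ (u - v)) m ≤ (u - v) m :=
    hP.mulVec_apply_le hpos.le (fun j => hm j (Finset.mem_univ j)) m
  have hle : (u - v) m ≤ β * (P *ᵥ (u - v)) m := by
    have := huv m
    rw [one_sub_smul_mulVec_apply, one_sub_smul_mulVec_apply] at this
    rw [mulVec_sub, Pi.sub_apply, Pi.sub_apply, mul_sub]
    linarith
  exact (mul_lt_of_lt_one_left hpos hβ1).not_ge
    (hle.trans (mul_le_mul_of_nonneg_left hPm hβ0))

lemma IsRowSubstochastic.isUnit_one_sub_smul (hP : IsRowSubstochastic P) (hβ0 : 0 ≤ β)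
    (hβ1 : β < 1) : IsUnit (1 - β • P) :=
  mulVec_injective_iff_isUnit.1 fun _ _ huv =>
    (hP.le_of_one_sub_smul_mulVec_le hβ0 hβ1 huv.le).antisymm
      (hP.le_of_one_sub_smul_mulVec_le hβ0 hβ1 huv.ge)

lemma IsRowSubstochastic.pAct (hP : IsRowSubstochastic P) (S : Finset N) :
    IsRowSubstochastic (PAct P S) where
  nonneg i j := by
    unfold PAct
    split_ifs
    exacts [hP.nonneg i j, zero_le_one, le_rfl]
  sum_le_one i := by
    by_cases hi : i ∈ S
    · simpa only [PAct, hi, if_true] using hP.sum_le_one i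
    · simp only [PAct, hi, if_false, Finset.sum_ite_eq, Finset.mem_univ, if_true, le_refl]

lemma BMat_mulVec_apply_of_mem (β : ℝ) (P : Matrix N N ℝ) (hi : i ∈ S) (v : N → ℝ) :
    (BMat β P S *ᵥ v) i = v i - β * (P *ᵥ v) i := by
  rw [BMat, one_sub_smul_mulVec_apply]
  simp only [mulVec, dotProduct, PAct, hi, if_true]

lemma BMat_mulVec_apply_of_notMem (β : ℝ) (P : Matrix N N ℝ) (hi : i ∉ S) (v : N → ℝ) :
    (BMat β P S *ᵥ v) i = (1 - β) * v i := by
  rw [BMat, one_sub_smul_mulVec_apply]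
  simp only [mulVec, dotProduct, PAct, hi, if_false, ite_mul, one_mul, zero_mul, Finset.sum_ite_eq,
    Finset.mem_univ, if_true, one_sub_mul]

lemma BMat_mulVec_fRew (hP : IsRowSubstochastic P) (hβ0 : 0 ≤ β) (hβ1 : β < 1) (c : N → ℝ)
    (S : Finset N) : BMat β P S *ᵥ fRew β P c S = fun j => if j ∈ S then c j else 0 := by
  have hdet : IsUnit (BMat β P S).det :=
    (isUnit_iff_isUnit_det _).1 ((hP.pAct S).isUnit_one_sub_smul hβ0 hβ1)
  rw [fRew, HMat, mulVec_mulVec, mul_nonsing_inv _ hdet, one_mulVec]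

lemma fRew_of_mem (hP : IsRowSubstochastic P) (hβ0 : 0 ≤ β) (hβ1 : β < 1) (c : N → ℝ)
    (hi : i ∈ S) : fRew β P c S i = c i + β * (P *ᵥ fRew β P c S) i := by
  have hB := congrFun (BMat_mulVec_fRew hP hβ0 hβ1 c S) i
  rw [BMat_mulVec_apply_of_mem β P hi, if_pos hi] at hB
  exact eq_add_of_sub_eq hB

lemma fRew_of_notMem (hP : IsRowSubstochastic P) (hβ0 : 0 ≤ β) (hβ1 : β < 1) (c : N → ℝ)
    (hi : i ∉ S) : fRew β P c S i = 0 := by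
  have hB := congrFun (BMat_mulVec_fRew hP hβ0 hβ1 c S) i
  rw [BMat_mulVec_apply_of_notMem β P hi, if_neg hi] at hB
  exact (mul_eq_zero.1 hB).resolve_left (sub_pos.2 hβ1).ne'

lemma rMarg_of_notMem (hP : IsRowSubstochastic P) (hβ0 : 0 ≤ β) (hβ1 : β < 1) (c : N → ℝ)
    (hi : i ∉ S) : rMarg β P c S i = c i + β * (P *ᵥ fRew β P c S) i := by
  rw [rMarg, if_neg hi, mulVec, dotProduct, Finset.sum_subset (Finset.subset_univ S)]
  intro j _ hj
  rw [fRew_of_notMem hP hβ0 hβ1 c hj, mul_zero]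

lemma gWork_eq_fRew_one (β : ℝ) (P : Matrix N N ℝ) (S : Finset N) :
    gWork β P S = fRew β P 1 S := rfl

lemma wMarg_eq_rMarg_one (β : ℝ) (P : Matrix N N ℝ) (S : Finset N) :
    wMarg β P S = rMarg β P 1 S := rfl

lemma fRew_sub_charge (β : ℝ) (P : Matrix N N ℝ) (R : N → ℝ) (ν : ℝ) (S : Finset N) (i : N) :
    fRew β P (fun j => R j - ν) S i = fRew β P R S i - ν * gWork β P S i := by
  have hrew : (fun j => if j ∈ S then R j - ν else 0) =
      (fun j => if j ∈ S then R j else 0) - ν • fun j => if j ∈ S then (1 : ℝ) else 0 := by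
    ext j
    by_cases hj : j ∈ S <;> simp [hj]
  rw [fRew, hrew, mulVec_sub, mulVec_smul]
  rfl

lemma rMarg_sub_charge (β : ℝ) (P : Matrix N N ℝ) (R : N → ℝ) (ν : ℝ) (S : Finset N) (i : N) :
    rMarg β P (fun j => R j - ν) S i = rMarg β P R S i - ν * wMarg β P S i := by
  simp only [rMarg, wMarg, fRew_sub_charge, mul_sub, Finset.sum_sub_distrib, mul_left_comm _ ν,
    ← Finset.mul_sum]
  split_ifs <;> ring

lemma fRew_nonneg (hP : IsRowSubstochastic P) (hβ0 : 0 ≤ β) (hβ1 : β < 1) (hc : 0 ≤ c)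
    (S : Finset N) : 0 ≤ fRew β P c S := by
  apply (hP.pAct S).le_of_one_sub_smul_mulVec_le hβ0 hβ1
  change BMat β P S *ᵥ 0 ≤ BMat β P S *ᵥ fRew β P c S
  rw [BMat_mulVec_fRew hP hβ0 hβ1, mulVec_zero]
  intro j
  dsimp only
  split_ifs
  exacts [hc j, le_rfl]

lemma add_mulVec_gWork_pos (hP : IsRowSubstochastic P) (hβ0 : 0 ≤ β) (hβ1 : β < 1)
    (S : Finset N) (i : N) : 0 < 1 + β * (P *ᵥ gWork β P S) i := by
  rw [gWork_eq_fRew_one]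
  exact add_pos_of_pos_of_nonneg one_pos <| mul_nonneg hβ0 <|
    hP.mulVec_nonneg (fRew_nonneg hP hβ0 hβ1 zero_le_one S) i

lemma gWork_pos (hP : IsRowSubstochastic P) (hβ0 : 0 ≤ β) (hβ1 : β < 1) (hi : i ∈ S) :
    0 < gWork β P S i := by
  rw [gWork_eq_fRew_one, fRew_of_mem hP hβ0 hβ1 1 hi]
  exact add_mulVec_gWork_pos hP hβ0 hβ1 S i

lemma wMarg_pos (hP : IsRowSubstochastic P) (hβ0 : 0 ≤ β) (hβ1 : β < 1) (S : Finset N) (i : N) :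
    0 < wMarg β P S i := by
  by_cases hi : i ∈ S
  · rw [wMarg, if_pos hi]
    exact mul_pos (sub_pos.2 hβ1) (gWork_pos hP hβ0 hβ1 hi)
  · rw [wMarg_eq_rMarg_one, rMarg_of_notMem hP hβ0 hβ1 1 hi]
    exact add_mulVec_gWork_pos hP hβ0 hβ1 S i

lemma nuMarg_le_iff (hP : IsRowSubstochastic P) (hβ0 : 0 ≤ β) (hβ1 : β < 1) (R : N → ℝ) (ν : ℝ)
    (S : Finset N) (i : N) : nuMarg β P R S i ≤ ν ↔ rMarg β P (fun j => R j - ν) S i ≤ 0 := by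
  rw [nuMarg, div_le_iff₀ (wMarg_pos hP hβ0 hβ1 S i), rMarg_sub_charge, sub_nonpos]

lemma le_nuMarg_iff (hP : IsRowSubstochastic P) (hβ0 : 0 ≤ β) (hβ1 : β < 1) (R : N → ℝ) (ν : ℝ)
    (S : Finset N) (i : N) : ν ≤ nuMarg β P R S i ↔ 0 ≤ rMarg β P (fun j => R j - ν) S i := by
  rw [nuMarg, le_div_iff₀ (wMarg_pos hP hβ0 hβ1 S i), rMarg_sub_charge, sub_nonneg]

end PartialActivity

section Optimality

variable {N : Type*} [Fintype N] [DecidableEq N] {P : Matrix N N ℝ} {β : ℝ} {c V : N → ℝ}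
  {S : Finset N} {i : N}

lemma fRew_le_of_isFixedPt_bellman (hP : IsRowSubstochastic P) (hβ0 : 0 ≤ β) (hβ1 : β < 1)
    (hV : Function.IsFixedPt (bellman β P c) V) (S : Finset N) : fRew β P c S ≤ V := by
  apply (hP.pAct S).le_of_one_sub_smul_mulVec_le hβ0 hβ1
  change BMat β P S *ᵥ fRew β P c S ≤ BMat β P S *ᵥ V
  rw [BMat_mulVec_fRew hP hβ0 hβ1]
  intro j
  dsimp only
  by_cases hj : j ∈ S
  · rw [BMat_mulVec_apply_of_mem β P hj, if_pos hj]
    exact le_sub_right_of_add_le (add_mulVec_le_of_isFixedPt_bellman hV j)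
  · rw [BMat_mulVec_apply_of_notMem β P hj, if_neg hj]
    exact mul_nonneg (sub_pos.2 hβ1).le (nonneg_of_isFixedPt_bellman hV j)

lemma fRew_eq_of_isFixedPt_bellman (hP : IsRowSubstochastic P) (hβ0 : 0 ≤ β) (hβ1 : β < 1)
    (hV : Function.IsFixedPt (bellman β P c) V) (hS : ∀ j, j ∈ S ↔ 0 < V j) :
    fRew β P c S = V := by
  refine mulVec_injective_iff_isUnit.2 ((hP.pAct S).isUnit_one_sub_smul hβ0 hβ1) ?_
  change BMat β P S *ᵥ fRew β P c S = BMat β P S *ᵥ V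
  rw [BMat_mulVec_fRew hP hβ0 hβ1]
  ext j
  by_cases hj : j ∈ S
  · rw [BMat_mulVec_apply_of_mem β P hj, if_pos hj]
    exact eq_sub_of_add_eq (eq_add_mulVec_of_isFixedPt_bellman hV ((hS j).1 hj)).symm
  · have hVj : V j = 0 :=
      (not_lt.1 (mt (hS j).2 hj)).antisymm (nonneg_of_isFixedPt_bellman hV j)
    rw [BMat_mulVec_apply_of_notMem β P hj, if_neg hj, hVj, mul_zero]

lemma rMarg_nonpos_of_isFixedPt_bellman (hP : IsRowSubstochastic P) (hβ0 : 0 ≤ β) (hβ1 : β < 1)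
    (hV : Function.IsFixedPt (bellman β P c) V) (hS : ∀ j, j ∈ S ↔ 0 < V j) (hi : i ∉ S) :
    rMarg β P c S i ≤ 0 := by
  rw [rMarg_of_notMem hP hβ0 hβ1 c hi, fRew_eq_of_isFixedPt_bellman hP hβ0 hβ1 hV hS]
  exact (add_mulVec_le_of_isFixedPt_bellman hV i).trans (not_lt.1 (mt (hS i).2 hi))

lemma rMarg_nonneg_of_isFixedPt_bellman (hP : IsRowSubstochastic P) (hβ0 : 0 ≤ β) (hβ1 : β < 1)
    (hV : Function.IsFixedPt (bellman β P c) V) (hS : ∀ j, j ∈ S ↔ 0 < V j) (hi : i ∈ S) :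
    0 ≤ rMarg β P c S i := by
  rw [rMarg, if_pos hi, fRew_eq_of_isFixedPt_bellman hP hβ0 hβ1 hV hS]
  exact mul_nonneg (sub_pos.2 hβ1).le (nonneg_of_isFixedPt_bellman hV i)

lemma Feasible.sum_mul_le {x0 x1 : N → ℝ} (hx : Feasible β P i x0 x1) (hβ1 : β ≤ 1) (hV0 : 0 ≤ V)
    (hV : c ≤ (1 - β • P) *ᵥ V) : ∑ j, c j * x1 j ≤ V i := by
  obtain ⟨hx0, hx1, heq⟩ := hx
  calc ∑ j, c j * x1 j
      ≤ x1 ⬝ᵥ ((1 - β • P) *ᵥ V) := Finset.sum_le_sum fun j _ =>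
        (mul_le_mul_of_nonneg_right (hV j) (hx1 j)).trans_eq (mul_comm _ _)
    _ ≤ (1 - β) * (x0 ⬝ᵥ V) + x1 ⬝ᵥ ((1 - β • P) *ᵥ V) :=
        le_add_of_nonneg_left (mul_nonneg (sub_nonneg.2 hβ1) (dotProduct_nonneg_of_nonneg hx0 hV0))
    _ = ((1 - β) • x0 + x1 ᵥ* (1 - β • P)) ⬝ᵥ V := by
        rw [add_dotProduct, smul_dotProduct, smul_eq_mul, dotProduct_mulVec]
    _ = V i := by rw [heq, single_dotProduct, one_mul]

lemma pos_iff_exists_fRew_pos (hP : IsRowSubstochastic P) (hβ0 : 0 ≤ β) (hβ1 : β < 1)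
    (hV : Function.IsFixedPt (bellman β P c) V) :
    0 < V i ↔ ∃ S, i ∈ S ∧ 0 < fRew β P c S i := by
  refine ⟨fun hi => ?_, fun ⟨S, _, hS⟩ =>
    hS.trans_le (fRew_le_of_isFixedPt_bellman hP hβ0 hβ1 hV S i)⟩
  have hS (j : N) : j ∈ Finset.univ.filter (fun k => 0 < V k) ↔ 0 < V j := by
    rw [Finset.mem_filter, and_iff_right (Finset.mem_univ j)]
  exact ⟨_, (hS i).2 hi, by rwa [fRew_eq_of_isFixedPt_bellman hP hβ0 hβ1 hV hS]⟩

lemma lt_gittinsIndex_iff (hP : IsRowSubstochastic P) (hβ0 : 0 ≤ β) (hβ1 : β < 1) (R : N → ℝ)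
    (ν : ℝ) : ν < gittinsIndex β P R i ↔ ∃ S, i ∈ S ∧ 0 < fRew β P (fun j => R j - ν) S i := by
  rw [gittinsIndex, Finset.lt_sup'_iff]
  simp only [Finset.mem_filter, Finset.mem_univ, true_and]
  refine exists_congr fun S => and_congr_right fun hi => ?_
  rw [lt_div_iff₀ (gWork_pos hP hβ0 hβ1 hi), fRew_sub_charge, sub_pos]

theorem stmt2_general (hP : IsRowSubstochastic P) (hβ0 : 0 ≤ β) (hβ1 : β < 1) (R : N → ℝ)
    (ν : ℝ) :
    let S := Finset.univ.filter fun k => ν < gittinsIndex β P R k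
    (∀ j ∉ S, nuMarg β P R S j ≤ ν) ∧
      (∀ j ∈ S, ν ≤ nuMarg β P R S j) ∧
      (∀ i : N, ∀ x0 x1 : N → ℝ, Feasible β P i x0 x1 →
        ∑ j, (R j - ν) * x1 j ≤ fRew β P R S i - ν * gWork β P S i) := by
  intro S
  obtain ⟨V, hV⟩ := exists_isFixedPt_bellman hP hβ0 hβ1 fun j => R j - ν
  have hS (k : N) : k ∈ S ↔ 0 < V k := by
    rw [Finset.mem_filter, and_iff_right (Finset.mem_univ k), lt_gittinsIndex_iff hP hβ0 hβ1,
      pos_iff_exists_fRew_pos hP hβ0 hβ1 hV]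
  refine ⟨fun j hj => ?_, fun j hj => ?_, fun i x0 x1 hx => ?_⟩
  · exact (nuMarg_le_iff hP hβ0 hβ1 R ν S j).2
      (rMarg_nonpos_of_isFixedPt_bellman hP hβ0 hβ1 hV hS hj)
  · exact (le_nuMarg_iff hP hβ0 hβ1 R ν S j).2
      (rMarg_nonneg_of_isFixedPt_bellman hP hβ0 hβ1 hV hS hj)
  · rw [← fRew_sub_charge, fRew_eq_of_isFixedPt_bellman hP hβ0 hβ1 hV hS]
    refine hx.sum_mul_le hβ1.le (nonneg_of_isFixedPt_bellman hV) fun j => ?_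
    rw [one_sub_smul_mulVec_apply]
    exact le_sub_right_of_add_le (add_mulVec_le_of_isFixedPt_bellman hV j)

end Optimality

/-- existence of the Gittins index: a function `ν*` whose upper-level
sets `S(ν)` pass the optimality test for every `ν`, so that the `S(ν)`-active
solution is optimal for the ν-charge LP from every initial state. -/
theorem stmt2 {N : Type*} [Fintype N] [DecidableEq N] [Nonempty N]
    (P : Matrix N N ℝ) (hP0 : ∀ i j, 0 ≤ P i j) (hP1 : ∀ i, ∑ j, P i j = 1)
    (β : ℝ) (hβ0 : 0 < β) (hβ1 : β < 1) (R : N → ℝ) :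
    ∃ nustar : N → ℝ, ∀ ν : ℝ,
      (∀ j ∉ (Finset.univ.filter fun k => ν < nustar k),
          nuMarg β P R (Finset.univ.filter fun k => ν < nustar k) j ≤ ν) ∧
      (∀ j ∈ (Finset.univ.filter fun k => ν < nustar k),
          ν ≤ nuMarg β P R (Finset.univ.filter fun k => ν < nustar k) j) ∧
      (∀ i : N, ∀ x0 x1 : N → ℝ, Feasible β P i x0 x1 →
        ∑ j, (R j - ν) * x1 j
          ≤ fRew β P R (Finset.univ.filter fun k => ν < nustar k) i
            - ν * gWork β P (Finset.univ.filter fun k => ν < nustar k) i) :=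
  ⟨gittinsIndex β P R, stmt2_general ⟨hP0, fun i => (hP1 i).le⟩ hβ0.le hβ1 R⟩
end
end

section
/- Fix S ⊆ N and an initial state i ∈ N. For every feasible pair (x⁰, x¹) for i, Σ_j R_j x¹_j = f_i^S − Σ_{j∈S} r_j^S x⁰_j + Σ_{j∉S} r_j^S x¹_j. (Proposition 3(b): decomposition of the reward measure relative to the S-active policy.) -/
open Matrix BigOperators
open scoped Classical

noncomputable section

/-!
The vector `f = f^S` solves `B^S f = R·1_S`, so it vanishes off `S` and satisfies
`(I - βP) f = R` on `S`. Read `f` as a dual vector for the constraint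
`(1-β) x⁰ + x¹ (I - βP) = α`: its reduced costs `(1-β) f` and `R - (I - βP) f` are then the marginal
rewards `r^S` restricted to `S` and to its complement, and pairing the constraint with `f` gives
the decomposition.
-/

section DiagonalDominance

variable {n : Type*} [Fintype n] [DecidableEq n]

theorem isUnit_det_one_sub_of_sum_norm_row_lt_one {K : Type*} [NormedField K] {A : Matrix n n K}
    (hA : ∀ i, ∑ j, ‖A i j‖ < 1) : IsUnit (1 - A).det := by
  refine isUnit_iff_ne_zero.2 (det_ne_zero_of_sum_row_lt_diag fun k => ?_)
  calc ∑ j ∈ Finset.univ.erase k, ‖(1 - A) k j‖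
      = ∑ j ∈ Finset.univ.erase k, ‖A k j‖ := by
        refine Finset.sum_congr rfl fun j hj => ?_
        rw [Matrix.sub_apply, one_apply_ne (Finset.ne_of_mem_erase hj).symm, zero_sub, norm_neg]
    _ < 1 - ‖A k k‖ := by
        rw [lt_sub_iff_add_lt, Finset.sum_erase_add _ _ (Finset.mem_univ k)]
        exact hA k
    _ ≤ ‖(1 - A) k k‖ := by
        rw [Matrix.sub_apply, one_apply_eq]
        simpa only [norm_one] using norm_sub_norm_le (1 : K) (A k k)

theorem isUnit_det_one_sub_smul_of_mem_rowStochastic {M : Matrix n n ℝ}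
    (hM : M ∈ rowStochastic ℝ n) {β : ℝ} (hβ : |β| < 1) : IsUnit (1 - β • M).det := by
  refine isUnit_det_one_sub_of_sum_norm_row_lt_one fun i => ?_
  calc ∑ j, ‖(β • M) i j‖ = ∑ j, |β| * M i j := by
        simp only [Matrix.smul_apply, smul_eq_mul, norm_mul, Real.norm_eq_abs,
          abs_of_nonneg (nonneg_of_mem_rowStochastic hM)]
    _ = |β| := by rw [← Finset.mul_sum, sum_row_of_mem_rowStochastic hM, mul_one]
    _ < 1 := hβ

end DiagonalDominance

theorem indicator_dotProduct {n K : Type*} [Fintype n] [NonUnitalNonAssocSemiring K]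
    (s : Finset n) (v w : n → K) : (s : Set n).indicator v ⬝ᵥ w = ∑ j ∈ s, v j * w j := by
  simp [dotProduct, Set.indicator_apply, ite_mul, Finset.sum_ite_mem]

theorem dotProduct_eq_sub_add_of_smul_add_vecMul_eq {m n K : Type*} [Fintype m] [Fintype n]
    [CommRing K] {A : Matrix m n K} {c : K} {α x0 : n → K} {x1 : m → K}
    (hx : c • x0 + x1 ᵥ* A = α) (R : m → K) (f : n → K) :
    R ⬝ᵥ x1 = α ⬝ᵥ f - (c • f) ⬝ᵥ x0 + (R - A *ᵥ f) ⬝ᵥ x1 := by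
  have pairing : α ⬝ᵥ f = (c • f) ⬝ᵥ x0 + (A *ᵥ f) ⬝ᵥ x1 := by
    rw [← hx, add_dotProduct, ← dotProduct_mulVec, smul_dotProduct, smul_dotProduct,
      dotProduct_comm x0, dotProduct_comm x1]
  rw [pairing, sub_dotProduct]
  ring

section ActivePolicy

variable {N : Type*} [DecidableEq N] {β : ℝ} {P : Matrix N N ℝ} {S : Finset N} {j : N}

theorem pAct_apply_of_mem (hj : j ∈ S) : PAct P S j = P j :=
  funext fun _ => if_pos hj

theorem pAct_apply_of_notMem (hj : j ∉ S) : PAct P S j = (1 : Matrix N N ℝ) j :=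
  funext fun _ => if_neg hj

variable [Fintype N]

theorem pAct_mem_rowStochastic (hP : P ∈ rowStochastic ℝ N) (S : Finset N) :
    PAct P S ∈ rowStochastic ℝ N := by
  simp only [mem_rowStochastic_iff_sum, ← forall_and] at hP ⊢
  intro i
  by_cases hi : i ∈ S
  · simpa only [pAct_apply_of_mem hi] using hP i
  · simpa only [pAct_apply_of_notMem hi] using
      (mem_rowStochastic_iff_sum.1 (one_mem (rowStochastic ℝ N))).imp (· i) (· i)

theorem isUnit_det_bMat (hP : P ∈ rowStochastic ℝ N) (hβ : |β| < 1) (S : Finset N) :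
    IsUnit (BMat β P S).det :=
  isUnit_det_one_sub_smul_of_mem_rowStochastic (pAct_mem_rowStochastic hP S) hβ

theorem bMat_apply_of_mem (hj : j ∈ S) : BMat β P S j = (1 - β • P) j := by
  ext k
  simp only [BMat, Matrix.sub_apply, Matrix.smul_apply, pAct_apply_of_mem hj]

theorem bMat_apply_of_notMem (hj : j ∉ S) : BMat β P S j = Pi.single j (1 - β) := by
  ext k
  simp only [BMat, Matrix.sub_apply, Matrix.smul_apply, pAct_apply_of_notMem hj]
  rcases eq_or_ne j k with rfl | hjk
  · simp
  · simp [hjk]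

theorem ne_one_of_isUnit_det_bMat (hB : IsUnit (BMat β P S).det) (hj : j ∉ S) : β ≠ 1 := by
  rintro rfl
  refine hB.ne_zero (det_eq_zero_of_row_eq_zero j fun k => ?_)
  rw [bMat_apply_of_notMem hj, sub_self, Pi.single_zero, Pi.zero_apply]

theorem bMat_mulVec_fRew (hB : IsUnit (BMat β P S).det) (R : N → ℝ) :
    BMat β P S *ᵥ fRew β P R S = fun j => if j ∈ S then R j else 0 := by
  rw [fRew, HMat, mulVec_mulVec, mul_nonsing_inv _ hB, one_mulVec]

theorem fRew_eq_zero_of_notMem (hB : IsUnit (BMat β P S).det) (R : N → ℝ) (hj : j ∉ S) :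
    fRew β P R S j = 0 := by
  have row : (1 - β) * fRew β P R S j = 0 := by
    simpa only [mulVec, bMat_apply_of_notMem hj, single_dotProduct, if_neg hj] using
      congrFun (bMat_mulVec_fRew hB R) j
  exact (mul_eq_zero.1 row).resolve_left (sub_ne_zero.2 (ne_one_of_isUnit_det_bMat hB hj).symm)

theorem one_sub_smul_mulVec_fRew_of_mem (hB : IsUnit (BMat β P S).det) (R : N → ℝ) (hj : j ∈ S) :
    ((1 - β • P) *ᵥ fRew β P R S) j = R j := by
  simpa only [mulVec, bMat_apply_of_mem hj, if_pos hj] using congrFun (bMat_mulVec_fRew hB R) j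

theorem sum_mul_fRew_eq_dotProduct (hB : IsUnit (BMat β P S).det) (R v : N → ℝ) :
    ∑ k ∈ S, v k * fRew β P R S k = v ⬝ᵥ fRew β P R S :=
  Finset.sum_subset (Finset.subset_univ S) fun k _ hk => by
    rw [fRew_eq_zero_of_notMem hB R hk, mul_zero]

theorem smul_fRew_eq_indicator_rMarg (hB : IsUnit (BMat β P S).det) (R : N → ℝ) :
    (1 - β) • fRew β P R S = (S : Set N).indicator (rMarg β P R S) := by
  ext j
  by_cases hj : j ∈ S
  · simp [hj, rMarg]
  · simp [hj, fRew_eq_zero_of_notMem hB R hj]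

theorem sub_mulVec_fRew_eq_indicator_rMarg (hB : IsUnit (BMat β P S).det) (R : N → ℝ) :
    R - (1 - β • P) *ᵥ fRew β P R S = (↑Sᶜ : Set N).indicator (rMarg β P R S) := by
  ext j
  by_cases hj : j ∈ S
  · simp [hj, one_sub_smul_mulVec_fRew_of_mem hB R hj]
  · have row : ((1 - β • P) *ᵥ fRew β P R S) j = -(β * ∑ k ∈ S, P j k * fRew β P R S k) := by
      rw [sum_mul_fRew_eq_dotProduct hB, sub_mulVec, one_mulVec, smul_mulVec, Pi.sub_apply,
        fRew_eq_zero_of_notMem hB R hj, zero_sub, Pi.smul_apply, smul_eq_mul, mulVec]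
    simp [hj, rMarg, row]

end ActivePolicy

theorem stmt5_general {N : Type*} [Fintype N] [DecidableEq N] {P : Matrix N N ℝ} {β : ℝ}
    {S : Finset N} (hB : IsUnit (BMat β P S).det) (R : N → ℝ) {α x0 x1 : N → ℝ}
    (hx : (1 - β) • x0 + x1 ᵥ* (1 - β • P) = α) :
    ∑ j, R j * x1 j
      = ∑ j, α j * fRew β P R S j - ∑ j ∈ S, rMarg β P R S j * x0 j
        + ∑ j ∈ Sᶜ, rMarg β P R S j * x1 j := by
  rw [← indicator_dotProduct S, ← indicator_dotProduct Sᶜ, ← smul_fRew_eq_indicator_rMarg hB,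
    ← sub_mulVec_fRew_eq_indicator_rMarg hB]
  exact dotProduct_eq_sub_add_of_smul_add_vecMul_eq hx R (fRew β P R S)

/-- Proposition 3(b): decomposition of the reward measure relative to
the S-active policy. -/
theorem stmt5 {N : Type*} [Fintype N] [DecidableEq N] [Nonempty N]
    (P : Matrix N N ℝ) (hP0 : ∀ i j, 0 ≤ P i j) (hP1 : ∀ i, ∑ j, P i j = 1)
    (β : ℝ) (hβ0 : 0 < β) (hβ1 : β < 1)
    (R : N → ℝ) (S : Finset N) (i : N) (x0 x1 : N → ℝ) (hx : Feasible β P i x0 x1) :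
    ∑ j, R j * x1 j
      = fRew β P R S i - ∑ j ∈ S, rMarg β P R S j * x0 j
        + ∑ j ∈ Sᶜ, rMarg β P R S j * x1 j := by
  have hP : P ∈ rowStochastic ℝ N := mem_rowStochastic_iff_sum.2 ⟨hP0, hP1⟩
  have hB : IsUnit (BMat β P S).det := isUnit_det_bMat hP (by rwa [abs_of_pos hβ0]) S
  simpa [Pi.single_apply] using stmt5_general hB R hx.2.2
end
end

section
/- For every subset S ⊆ N and every state i ∈ N, the marginal workload is strictly positive: w_i^S > 0. -/
open Matrix BigOperators
open scoped Classical

noncomputable section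

/-!
A nonnegative matrix `A` with row sums below `1` obeys a minimum principle: if `A v ≤ v`, then
`v ≥ 0`, because a negative minimum `v m` would satisfy
`v m ≥ ∑ j, A m j * v j ≥ (∑ j, A m j) * v m > v m`. Applied to `±v` for `v` in the kernel of
`I - A` this gives invertibility, and applied to `x = (I - A)⁻¹ b` with `b ≥ 0` it gives `x ≥ 0`,
so that `x = b + A x ≥ b`. For `A = β P^S` and `b = 1_S` this says `g^S ≥ 1_S`, which makes the
marginal work at least `1 - β` on `S` and at least `1` off `S`.
-/

section NonnegMatrix

variable {n : Type*} [Fintype n]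

theorem nonneg_of_mulVec_le {R : Type*} [Ring R] [LinearOrder R] [IsStrictOrderedRing R]
    {A : Matrix n n R} (hA : ∀ i j, 0 ≤ A i j) (hsum : ∀ i, ∑ j, A i j < 1)
    {v : n → R} (hv : A *ᵥ v ≤ v) : 0 ≤ v := by
  intro i
  have : Nonempty n := ⟨i⟩
  obtain ⟨m, hm⟩ := Finite.exists_min v
  suffices 0 ≤ v m from this.trans (hm i)
  by_contra! hneg
  refine lt_irrefl (v m) ?_
  calc
    v m = 1 * v m := (one_mul _).symm
    _ < (∑ j, A m j) * v m := mul_lt_mul_of_neg_right (hsum m) hneg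
    _ = ∑ j, A m j * v m := Finset.sum_mul ..
    _ ≤ ∑ j, A m j * v j :=
      Finset.sum_le_sum fun j _ => mul_le_mul_of_nonneg_left (hm j) (hA m j)
    _ ≤ v m := hv m

variable [DecidableEq n]

theorem det_one_sub_ne_zero {R : Type*} [CommRing R] [LinearOrder R] [IsStrictOrderedRing R]
    {A : Matrix n n R} (hA : ∀ i j, 0 ≤ A i j) (hsum : ∀ i, ∑ j, A i j < 1) :
    (1 - A).det ≠ 0 := by
  intro hdet
  obtain ⟨v, hv_ne, hv⟩ := exists_mulVec_eq_zero_iff.mpr hdet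
  have hfix : A *ᵥ v = v := by
    rw [sub_mulVec, one_mulVec, sub_eq_zero] at hv
    exact hv.symm
  have hv_nonneg : 0 ≤ v := nonneg_of_mulVec_le hA hsum hfix.le
  have hv_nonpos : 0 ≤ -v := nonneg_of_mulVec_le hA hsum (by rw [mulVec_neg, hfix])
  exact hv_ne (le_antisymm (neg_nonneg.mp hv_nonpos) hv_nonneg)

variable {K : Type*} [Field K] [LinearOrder K] [IsStrictOrderedRing K] {A : Matrix n n K}

theorem inv_one_sub_mulVec_eq_add (hA : ∀ i j, 0 ≤ A i j) (hsum : ∀ i, ∑ j, A i j < 1)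
    (b : n → K) : (1 - A)⁻¹ *ᵥ b = b + A *ᵥ ((1 - A)⁻¹ *ᵥ b) := by
  have hsolve : (1 - A) *ᵥ ((1 - A)⁻¹ *ᵥ b) = b := by
    rw [mulVec_mulVec, mul_nonsing_inv _ (det_one_sub_ne_zero hA hsum).isUnit, one_mulVec]
  rwa [sub_mulVec, one_mulVec, sub_eq_iff_eq_add] at hsolve

theorem inv_one_sub_mulVec_nonneg (hA : ∀ i j, 0 ≤ A i j) (hsum : ∀ i, ∑ j, A i j < 1)
    {b : n → K} (hb : 0 ≤ b) : 0 ≤ (1 - A)⁻¹ *ᵥ b := by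
  refine nonneg_of_mulVec_le hA hsum ?_
  conv_rhs => rw [inv_one_sub_mulVec_eq_add hA hsum b]
  exact le_add_of_nonneg_left hb

theorem le_inv_one_sub_mulVec (hA : ∀ i j, 0 ≤ A i j) (hsum : ∀ i, ∑ j, A i j < 1)
    {b : n → K} (hb : 0 ≤ b) : b ≤ (1 - A)⁻¹ *ᵥ b := by
  rw [inv_one_sub_mulVec_eq_add hA hsum b]
  exact le_add_of_nonneg_right fun i =>
    dotProduct_nonneg_of_nonneg (hA i) (inv_one_sub_mulVec_nonneg hA hsum hb)

end NonnegMatrix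

section MarginalWork

variable {N : Type*} [DecidableEq N] {P : Matrix N N ℝ} {β : ℝ} {S : Finset N}

theorem PAct_nonneg (hP : ∀ i ∈ S, ∀ j, 0 ≤ P i j) (i j : N) : 0 ≤ PAct P S i j := by
  unfold PAct
  split_ifs with hi
  exacts [hP i hi j, zero_le_one, le_rfl]

theorem smul_PAct_nonneg (hP : ∀ i ∈ S, ∀ j, 0 ≤ P i j) (hβ : 0 ≤ β) (i j : N) :
    0 ≤ (β • PAct P S) i j :=
  mul_nonneg hβ (PAct_nonneg hP i j)

variable [Fintype N]

theorem sum_PAct (P : Matrix N N ℝ) (S : Finset N) (i : N) :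
    ∑ j, PAct P S i j = if i ∈ S then ∑ j, P i j else 1 := by
  by_cases hi : i ∈ S <;> simp [PAct, hi]

theorem sum_smul_PAct_lt_one (hβ : β < 1) (hsum : ∀ i ∈ S, β * ∑ j, P i j < 1) (i : N) :
    ∑ j, (β • PAct P S) i j < 1 := by
  simp only [Matrix.smul_apply, smul_eq_mul, ← Finset.mul_sum, sum_PAct]
  split_ifs with hi
  · exact hsum i hi
  · rwa [mul_one]

theorem one_le_gWork (hP : ∀ i ∈ S, ∀ j, 0 ≤ P i j) (hβ0 : 0 ≤ β) (hβ1 : β < 1)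
    (hsum : ∀ i ∈ S, β * ∑ j, P i j < 1) {i : N} (hi : i ∈ S) : 1 ≤ gWork β P S i := by
  have indicator_le_gWork : (fun j => if j ∈ S then 1 else 0) ≤ gWork β P S :=
    le_inv_one_sub_mulVec (smul_PAct_nonneg hP hβ0) (sum_smul_PAct_lt_one hβ1 hsum)
      fun _ => ite_nonneg zero_le_one le_rfl
  simpa only [if_pos hi] using indicator_le_gWork i

end MarginalWork

theorem stmt9_general {N : Type*} [Fintype N] [DecidableEq N]
    (P : Matrix N N ℝ) (hP : ∀ i j, 0 ≤ P i j) (β : ℝ) (hβ0 : 0 ≤ β) (hβ1 : β < 1)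
    (S : Finset N) (hsum : ∀ i ∈ S, β * ∑ j, P i j < 1) (i : N) :
    0 < wMarg β P S i := by
  have gWork_ge_one : ∀ j ∈ S, 1 ≤ gWork β P S j := fun _ hj =>
    one_le_gWork (fun i _ => hP i) hβ0 hβ1 hsum hj
  unfold wMarg
  split_ifs with hi
  · exact mul_pos (sub_pos.mpr hβ1) (one_pos.trans_le (gWork_ge_one i hi))
  · have sum_nonneg : 0 ≤ ∑ j ∈ S, P i j * gWork β P S j :=
      Finset.sum_nonneg fun j hj => mul_nonneg (hP i j) (zero_le_one.trans (gWork_ge_one j hj))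
    exact add_pos_of_pos_of_nonneg one_pos (mul_nonneg hβ0 sum_nonneg)

/-- marginal workloads are strictly positive. -/
theorem stmt9 {N : Type*} [Fintype N] [DecidableEq N] [Nonempty N]
    (P : Matrix N N ℝ) (hP0 : ∀ i j, 0 ≤ P i j) (hP1 : ∀ i, ∑ j, P i j = 1)
    (β : ℝ) (hβ0 : 0 < β) (hβ1 : β < 1) (S : Finset N) (i : N) :
    0 < wMarg β P S i :=
  stmt9_general P hP0 β hβ0.le hβ1 S (fun i _ => by rwa [hP1, mul_one]) i
end
end
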